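/- arXiv:2605.14058 — 8 statements merged into one kernel-verified Lean document; each statement's English description precedes it below -/
import Mathlib

section
/- Let X be an m×n real matrix with all entries nonnegative and let S be a fooling set of X. If X = W·H for some entrywise nonnegative matrices W ∈ ℝ^{m×r} and H ∈ ℝ^{r×n}, then the cardinality of S is at most r. (In particular, the nonnegative rank of X is at least the maximum cardinality of a fooling set of X.) -/
/-!
Write `X i j = ∑ t, W i t * H t j`. Each pair `(i, j)` of the fooling set has `X i j > 0`, so some
`t` satisfies `W i t > 0` and `H t j > 0`. If two pairs `(i, j)`, `(k, l)` shared the same `t`, then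
`X i l` and `X k j` would both be positive, since all summands are nonnegative; this contradicts the
fooling condition unless the pairs coincide. Hence `(i, j) ↦ t` is injective from `S` to `Fin r`.
-/

/-- A fooling set of a nonnegative matrix `X`: a set `S` of index pairs such that
`X` is positive on every pair in `S`, and any two distinct pairs `(i,j), (k,l) ∈ S`
satisfy `i ≠ k`, `j ≠ l`, and `X i l = 0` or `X k j = 0`. -/
def IsFoolingSet {m n : ℕ} (X : Matrix (Fin m) (Fin n) ℝ)
    (S : Finset (Fin m × Fin n)) : Prop :=
  (∀ p ∈ S, 0 < X p.1 p.2) ∧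
  ∀ p ∈ S, ∀ q ∈ S, p ≠ q →
    p.1 ≠ q.1 ∧ p.2 ≠ q.2 ∧ (X p.1 q.2 = 0 ∨ X q.1 p.2 = 0)

/-- If `X = W * H` is an exact nonnegative factorization of size `r`, then every
fooling set of `X` has cardinality at most `r`. -/
theorem foolingSet_card_le_of_exact_nmf {m n r : ℕ}
    (X : Matrix (Fin m) (Fin n) ℝ) (hX : ∀ i j, 0 ≤ X i j)
    (S : Finset (Fin m × Fin n)) (hS : IsFoolingSet X S)
    (W : Matrix (Fin m) (Fin r) ℝ) (H : Matrix (Fin r) (Fin n) ℝ)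
    (hW : ∀ i k, 0 ≤ W i k) (hH : ∀ k j, 0 ≤ H k j)
    (hWH : X = W * H) :
    S.card ≤ r := by
  subst hWH
  obtain ⟨hpos, hfool⟩ := hS
  have entry_pos : ∀ i j t, 0 < W i t → 0 < H t j → 0 < (W * H) i j := by
    intro i j t hw hh
    rw [Matrix.mul_apply]
    exact Finset.sum_pos' (fun s _ => mul_nonneg (hW i s) (hH s j))
      ⟨t, Finset.mem_univ t, mul_pos hw hh⟩
  have exists_index : ∀ p : S, ∃ t, 0 < W p.1.1 t ∧ 0 < H t p.1.2 := by
    intro p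
    have hp := hpos p.1 p.2
    rw [Matrix.mul_apply] at hp
    obtain ⟨t, -, ht⟩ := Finset.exists_ne_zero_of_sum_ne_zero hp.ne'
    exact ⟨t, (hW _ _).lt_of_ne' (left_ne_zero_of_mul ht),
      (hH _ _).lt_of_ne' (right_ne_zero_of_mul ht)⟩
  choose f hfW hfH using exists_index
  have f_injective : Function.Injective f := by
    intro p q hpq
    by_contra hne
    obtain ⟨-, -, h | h⟩ := hfool p.1 p.2 q.1 q.2 (fun h => hne (Subtype.ext h))
    · exact (entry_pos _ _ (f p) (hfW p) (hpq ▸ hfH q)).ne' h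
    · exact (entry_pos _ _ (f p) (hpq ▸ hfW q) (hfH p)).ne' h
  simpa using Fintype.card_le_of_injective f f_injective
end

section
/- Let X ∈ ℝ^{m×n} be entrywise nonnegative and suppose X = W·H with W ∈ ℝ^{m×r} and H ∈ ℝ^{r×n} entrywise nonnegative. Then there exist binary vectors u_1,…,u_r ∈ {0,1}^m and v_1,…,v_r ∈ {0,1}^n such that for each k the support of the rank-one binary matrix u_k v_k^T is contained in supp(X), and the union over k of the supports of the u_k v_k^T equals supp(X). Consequently, the rectangle covering number of X is at most the nonnegative rank of X. -/
/-!
Since all terms of `X i j = ∑ k, W i k * H k j` are nonnegative, the sum is positive exactly when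
some term is, that is, when `W i k` and `H k j` are both positive for some `k`. Hence the indicator
vectors of the supports of the columns of `W` and of the rows of `H` form a rectangle cover.
-/

/-- From an exact nonnegative factorization `X = W * H` of size `r` one obtains a
rectangle cover of `X` of size `r`: binary vectors `u k ∈ {0,1}^m`, `v k ∈ {0,1}^n`
such that each rank-one binary matrix `(u k) (v k)ᵀ` has support contained in
`supp X`, and the union of the supports equals `supp X`.  Hence the rectangle
covering number of `X` is at most its nonnegative rank. -/
theorem rectangle_cover_of_exact_nmf {m n r : ℕ}
    (X : Matrix (Fin m) (Fin n) ℝ) (hX : ∀ i j, 0 ≤ X i j)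
    (W : Matrix (Fin m) (Fin r) ℝ) (H : Matrix (Fin r) (Fin n) ℝ)
    (hW : ∀ i k, 0 ≤ W i k) (hH : ∀ k j, 0 ≤ H k j)
    (hWH : X = W * H) :
    ∃ (u : Fin r → Fin m → ℝ) (v : Fin r → Fin n → ℝ),
      (∀ k i, u k i = 0 ∨ u k i = 1) ∧
      (∀ k j, v k j = 0 ∨ v k j = 1) ∧
      (∀ k i j, 0 < u k i * v k j → 0 < X i j) ∧
      (∀ i j, 0 < X i j → ∃ k, 0 < u k i * v k j) := by
  have key : ∀ i j, 0 < X i j ↔ ∃ k, 0 < W i k ∧ 0 < H k j := by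
    intro i j
    have hnonneg : ∀ k ∈ Finset.univ, 0 ≤ W i k * H k j :=
      fun k _ => mul_nonneg (hW i k) (hH k j)
    rw [hWH, Matrix.mul_apply, Finset.sum_pos_iff_of_nonneg hnonneg]
    constructor
    · rintro ⟨k, -, hk⟩
      exact ⟨k, pos_of_mul_pos_left hk (hH k j), pos_of_mul_pos_right hk (hW i k)⟩
    · rintro ⟨k, hWk, hHk⟩
      exact ⟨k, Finset.mem_univ k, mul_pos hWk hHk⟩
  refine ⟨fun k i => if 0 < W i k then 1 else 0, fun k j => if 0 < H k j then 1 else 0,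
    fun k i => (ite_eq_or_eq _ _ _).symm, fun k j => (ite_eq_or_eq _ _ _).symm, ?_, ?_⟩
  · intro k i j h
    refine (key i j).2 ⟨k, ?_, ?_⟩
    · by_contra hn
      simp [hn] at h
    · by_contra hn
      simp [hn] at h
  · intro i j h
    obtain ⟨k, hWk, hHk⟩ := (key i j).1 h
    exact ⟨k, by simp [hWk, hHk]⟩
end

section
/- Let X ∈ ℝ^{m×n} be entrywise nonnegative and nonzero, and suppose X = W·H with W ∈ ℝ^{m×r}, H ∈ ℝ^{r×n} entrywise nonnegative. Let L ∈ ℝ^{m×n} and let α ∈ ℝ be such that ⟨L, u v^T⟩ ≤ α for all u ∈ [0,1]^m and v ∈ [0,1]^n. Then ⟨L, X⟩ ≤ r · ‖X‖_∞ · α, where ‖X‖_∞ = max_{i,j} X_{ij}. (This establishes the validity of the hyperplane separation bound: rank_+(X) ≥ ⟨L, X/‖X‖_∞⟩ / α(L).) -/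
/-! Writing `X = ∑ k, W_{·k} H_{k·}`, nonnegativity makes every rank-one term entrywise at most
`X`, hence at most `C`. A nonnegative rank-one matrix `w hᵀ` is `(max w) (max h)` times an outer
product of vectors with entries in `[0,1]`, and `(max w) (max h)` is one of its entries, so it is
at most `C`. Each of the `r` terms therefore contributes at most `C * α`
(`inner_rankOne_le`; here `0 ≤ α`, by taking `u = v = 0`). -/

/-- The bound for a single nonnegative rank-one matrix whose entries are at most `C`. -/
lemma inner_rankOne_le {m n : ℕ} [Nonempty (Fin m)] [Nonempty (Fin n)]
    (L : Matrix (Fin m) (Fin n) ℝ) (α C : ℝ)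
    (hα : ∀ (u : Fin m → ℝ) (v : Fin n → ℝ),
      (∀ i, 0 ≤ u i ∧ u i ≤ 1) → (∀ j, 0 ≤ v j ∧ v j ≤ 1) →
      ∑ i, ∑ j, L i j * (u i * v j) ≤ α)
    (w : Fin m → ℝ) (h : Fin n → ℝ) (hw : ∀ i, 0 ≤ w i) (hh : ∀ j, 0 ≤ h j)
    (hC : ∀ i j, w i * h j ≤ C) :
    ∑ i, ∑ j, L i j * (w i * h j) ≤ C * α := by
  have hα0 : 0 ≤ α := by
    simpa using hα 0 0 (by simp) (by simp)
  obtain ⟨a, ha⟩ := Finite.exists_max w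
  obtain ⟨b, hb⟩ := Finite.exists_max h
  -- If the maximum is zero, then `w = 0`, and the convention `x / 0 = 0` keeps this true.
  have hwa : ∀ i, w i = w a * (w i / w a) := fun i => by
    rcases eq_or_ne (w a) 0 with h0 | h0
    · have := ha i
      have := hw i
      rw [h0]; linarith
    · field_simp
  have hhb : ∀ j, h j = h b * (h j / h b) := fun j => by
    rcases eq_or_ne (h b) 0 with h0 | h0
    · have := hb j
      have := hh j
      rw [h0]; linarith
    · field_simp
  have key := hα (fun i => w i / w a) (fun j => h j / h b)
    (fun i => ⟨div_nonneg (hw i) (hw a), div_le_one_of_le₀ (ha i) (hw a)⟩)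
    (fun j => ⟨div_nonneg (hh j) (hh b), div_le_one_of_le₀ (hb j) (hh b)⟩)
  calc ∑ i, ∑ j, L i j * (w i * h j)
      = (w a * h b) * ∑ i, ∑ j, L i j * (w i / w a * (h j / h b)) := by
        simp only [Finset.mul_sum]
        refine Finset.sum_congr rfl fun i _ => Finset.sum_congr rfl fun j _ => ?_
        calc L i j * (w i * h j)
            = L i j * ((w a * (w i / w a)) * (h b * (h j / h b))) := by rw [← hwa, ← hhb]
          _ = _ := by ring
    _ ≤ (w a * h b) * α := mul_le_mul_of_nonneg_left key (mul_nonneg (hw a) (hh b))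
    _ ≤ C * α := mul_le_mul_of_nonneg_right (hC a b) hα0

/-- Validity of the hyperplane separation bound.  Let `X` be nonnegative and
nonzero with exact nonnegative factorization `X = W * H` of size `r`, let
`C = ‖X‖_∞` be the largest entry of `X`, and suppose `⟨L, u vᵀ⟩ ≤ α` for all
`u ∈ [0,1]^m`, `v ∈ [0,1]^n`.  Then `⟨L, X⟩ ≤ r * C * α`. -/
theorem hsb_valid {m n r : ℕ}
    (X : Matrix (Fin m) (Fin n) ℝ) (hX : ∀ i j, 0 ≤ X i j)
    (hX0 : ∃ i j, X i j ≠ 0)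
    (W : Matrix (Fin m) (Fin r) ℝ) (H : Matrix (Fin r) (Fin n) ℝ)
    (hW : ∀ i k, 0 ≤ W i k) (hH : ∀ k j, 0 ≤ H k j)
    (hWH : X = W * H)
    (L : Matrix (Fin m) (Fin n) ℝ) (α C : ℝ)
    (hCub : ∀ i j, X i j ≤ C) (hCmem : ∃ i j, X i j = C)
    (hα : ∀ (u : Fin m → ℝ) (v : Fin n → ℝ),
      (∀ i, 0 ≤ u i ∧ u i ≤ 1) → (∀ j, 0 ≤ v j ∧ v j ≤ 1) →
      ∑ i, ∑ j, L i j * (u i * v j) ≤ α) :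
    ∑ i, ∑ j, L i j * X i j ≤ (r : ℝ) * C * α := by
  obtain ⟨i₀, j₀, -⟩ := hX0
  haveI : Nonempty (Fin m) := ⟨i₀⟩
  haveI : Nonempty (Fin n) := ⟨j₀⟩
  have hterm : ∀ k, ∑ i, ∑ j, L i j * (W i k * H k j) ≤ C * α := fun k =>
    inner_rankOne_le L α C hα (fun i => W i k) (fun j => H k j) (fun i => hW i k) (hH k)
      fun i j => by
        refine le_trans ?_ (hCub i j)
        rw [hWH, Matrix.mul_apply]
        exact Finset.single_le_sum (f := fun k => W i k * H k j)
          (fun k _ => mul_nonneg (hW i k) (hH k j)) (Finset.mem_univ k)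
  calc ∑ i, ∑ j, L i j * X i j
      = ∑ k, ∑ i, ∑ j, L i j * (W i k * H k j) := by
        simp only [hWH, Matrix.mul_apply, Finset.mul_sum]
        rw [Finset.sum_comm (s := (Finset.univ : Finset (Fin r)))]
        exact Finset.sum_congr rfl fun i _ => Finset.sum_comm
    _ ≤ ∑ _k : Fin r, C * α := Finset.sum_le_sum fun k _ => hterm k
    _ = (r : ℝ) * C * α := by simp [mul_assoc]
end

section
/- Let X ∈ ℝ^{m×n} be entrywise nonnegative and nonzero, and suppose X = W·H with W ∈ ℝ^{m×r}, H ∈ ℝ^{r×n} entrywise nonnegative. Let L ∈ ℝ^{m×n} satisfy ⟨L, u v^T⟩ ≤ 1 for every u ∈ {0,1}^m and v ∈ {0,1}^n such that u_i v_j = 0 whenever X_{ij} = 0. Then ⟨L, X⟩ ≤ r · ‖X‖_∞. (This is the validity of the linear-programming formulation of the hyperplane separation bound, in which only admissible binary rank-one matrices are constrained.) -/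
/-!
Writing `X = ∑ₖ wₖ hₖᵀ` over the columns `wₖ` of `W` and the rows `hₖ` of `H`, it suffices to show
`⟨L, wₖ hₖᵀ⟩ ≤ C` for each `k`. With `a = max wₖ` and `b = max hₖ`, the vectors lie in the boxes
`[0, a]^m` and `[0, b]^n`, and the form `(w, h) ↦ ⟨L, w hᵀ⟩` is linear in each argument, so rounding
first `wₖ` and then `hₖ` to a vertex of its box (`exists_binary_rounding`) does not decrease it.
Rounding keeps zero entries zero, and `wₖ i * hₖ j ≤ X i j` by nonnegativity, so the resulting
binary rank-one matrix `u vᵀ` is admissible. Hence `⟨L, wₖ hₖᵀ⟩ ≤ a b ⟨L, u vᵀ⟩ ≤ a b`, and `a b` is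
an entry of `wₖ hₖᵀ`, so it is at most `C`.
-/

/-- A linear functional on the box `[0, a]^ι` is bounded at `x` by its value at some vertex `a • u`
whose support is contained in that of `x`. -/
lemma exists_binary_rounding {ι : Type*} [Fintype ι] (c x : ι → ℝ) (a : ℝ)
    (hx0 : ∀ i, 0 ≤ x i) (hxa : ∀ i, x i ≤ a) :
    ∃ u : ι → ℝ, (∀ i, u i = 0 ∨ u i = 1) ∧ (∀ i, x i = 0 → u i = 0) ∧
      ∑ i, c i * x i ≤ a * ∑ i, c i * u i := by
  classical
  refine ⟨fun i => if x i ≠ 0 ∧ 0 < c i then 1 else 0, fun i => ?_, fun i hi => ?_, ?_⟩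
  · by_cases h : x i ≠ 0 ∧ 0 < c i <;> simp [h]
  · simp [hi]
  · rw [Finset.mul_sum]
    refine Finset.sum_le_sum fun i _ => ?_
    by_cases h : x i ≠ 0 ∧ 0 < c i
    · simp only [h, ne_eq, not_false_eq_true, and_self, if_true]
      nlinarith [mul_le_mul_of_nonneg_left (hxa i) h.2.le]
    · simp only [h, if_false, mul_zero]
      by_cases hi : x i = 0
      · simp [hi]
      · have hc : c i ≤ 0 := not_lt.mp fun hc => h ⟨hi, hc⟩
        exact mul_nonpos_of_nonpos_of_nonneg hc (hx0 i)

/-- Validity of the LP formulation of the hyperplane separation bound.  Let `X`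
be nonnegative and nonzero with exact nonnegative factorization `X = W * H` of
size `r`, and let `C = ‖X‖_∞` be the largest entry of `X`.  If `⟨L, u vᵀ⟩ ≤ 1`
for every admissible binary rank-one matrix, i.e. for all `u ∈ {0,1}^m`,
`v ∈ {0,1}^n` with `u i * v j = 0` whenever `X i j = 0`, then `⟨L, X⟩ ≤ r * C`. -/
theorem hsb_lp_valid {m n r : ℕ}
    (X : Matrix (Fin m) (Fin n) ℝ) (hX : ∀ i j, 0 ≤ X i j)
    (hX0 : ∃ i j, X i j ≠ 0)
    (W : Matrix (Fin m) (Fin r) ℝ) (H : Matrix (Fin r) (Fin n) ℝ)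
    (hW : ∀ i k, 0 ≤ W i k) (hH : ∀ k j, 0 ≤ H k j)
    (hWH : X = W * H)
    (L : Matrix (Fin m) (Fin n) ℝ) (C : ℝ)
    (hCub : ∀ i j, X i j ≤ C) (hCmem : ∃ i j, X i j = C)
    (hL : ∀ (u : Fin m → ℝ) (v : Fin n → ℝ),
      (∀ i, u i = 0 ∨ u i = 1) → (∀ j, v j = 0 ∨ v j = 1) →
      (∀ i j, X i j = 0 → u i * v j = 0) →
      ∑ i, ∑ j, L i j * (u i * v j) ≤ 1) :
    ∑ i, ∑ j, L i j * X i j ≤ (r : ℝ) * C := by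
  obtain ⟨i₁, j₁, -⟩ := hX0
  have : Nonempty (Fin m) := ⟨i₁⟩
  have : Nonempty (Fin n) := ⟨j₁⟩
  have hle : ∀ k i j, W i k * H k j ≤ X i j := by
    intro k i j
    rw [hWH, Matrix.mul_apply]
    exact Finset.single_le_sum (f := fun k => W i k * H k j)
      (fun k _ => mul_nonneg (hW i k) (hH k j)) (Finset.mem_univ k)
  have key : ∀ k, ∑ i, ∑ j, L i j * (W i k * H k j) ≤ C := by
    intro k
    obtain ⟨i₀, hi₀⟩ := Finite.exists_max fun i => W i k
    obtain ⟨j₀, hj₀⟩ := Finite.exists_max fun j => H k j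
    obtain ⟨u, hu, hu0, hule⟩ := exists_binary_rounding
      (fun i => ∑ j, L i j * H k j) (fun i => W i k) (W i₀ k) (fun i => hW i k) hi₀
    obtain ⟨v, hv, hv0, hvle⟩ := exists_binary_rounding
      (fun j => ∑ i, L i j * u i) (fun j => H k j) (H k j₀) (fun j => hH k j) hj₀
    have hadm : ∀ i j, X i j = 0 → u i * v j = 0 := by
      intro i j hij
      have h0 : W i k * H k j = 0 :=
        le_antisymm (hij ▸ hle k i j) (mul_nonneg (hW i k) (hH k j))
      rcases mul_eq_zero.mp h0 with h | h
      · rw [hu0 i h, zero_mul]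
      · rw [hv0 j h, mul_zero]
    calc ∑ i, ∑ j, L i j * (W i k * H k j)
        = ∑ i, (∑ j, L i j * H k j) * W i k := by
          simp only [Finset.sum_mul]
          exact Finset.sum_congr rfl fun i _ => Finset.sum_congr rfl fun j _ => by ring
      _ ≤ W i₀ k * ∑ i, (∑ j, L i j * H k j) * u i := hule
      _ = W i₀ k * ∑ j, (∑ i, L i j * u i) * H k j := by
          simp only [Finset.sum_mul]
          rw [Finset.sum_comm]
          congr 1
          exact Finset.sum_congr rfl fun j _ => Finset.sum_congr rfl fun i _ => by ring
      _ ≤ W i₀ k * (H k j₀ * ∑ j, (∑ i, L i j * u i) * v j) :=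
          mul_le_mul_of_nonneg_left hvle (hW i₀ k)
      _ = W i₀ k * H k j₀ * ∑ i, ∑ j, L i j * (u i * v j) := by
          simp only [Finset.sum_mul]
          rw [Finset.sum_comm, ← mul_assoc]
          congr 1
          exact Finset.sum_congr rfl fun i _ => Finset.sum_congr rfl fun j _ => by ring
      _ ≤ W i₀ k * H k j₀ :=
          mul_le_of_le_one_right (mul_nonneg (hW i₀ k) (hH k j₀)) (hL u v hu hv hadm)
      _ ≤ C := (hle k i₀ j₀).trans (hCub i₀ j₀)
  calc ∑ i, ∑ j, L i j * X i j
      = ∑ k, ∑ i, ∑ j, L i j * (W i k * H k j) := by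
        symm
        rw [Finset.sum_comm]
        refine Finset.sum_congr rfl fun i _ => ?_
        rw [Finset.sum_comm]
        refine Finset.sum_congr rfl fun j _ => ?_
        rw [hWH, Matrix.mul_apply, Finset.mul_sum]
    _ ≤ ∑ _k : Fin r, C := Finset.sum_le_sum fun k _ => key k
    _ = (r : ℝ) * C := by simp
end

section
/- Let X ∈ ℝ^{m×n} be entrywise nonnegative and let L ∈ ℝ^{m×n} satisfy ⟨L, u v^T⟩ ≤ 1 for all u ∈ ℝ^m, v ∈ ℝ^n with nonnegative entries such that u_i v_j ≤ X_{ij} for all (i,j). If X = W·H with W ∈ ℝ^{m×r}, H ∈ ℝ^{r×n} entrywise nonnegative, then ⟨L, X⟩ ≤ r. (This establishes the validity of the self-scaled bound: rank_+(X) ≥ SSB(X).) -/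
/-!
Write `X = W * H` as the sum of the `r` rank-one matrices `W_{·k} H_{k·}`. Since all of them are
nonnegative, each is entrywise at most `X`, so `L` pairs to at most `1` with each. Summing these
`r` inequalities and using linearity of the pairing gives `⟨L, X⟩ ≤ r`.
-/

/-- Validity of the self-scaled bound.  Let `X` be entrywise nonnegative and let
`L` satisfy `⟨L, u vᵀ⟩ ≤ 1` for all nonnegative `u ∈ ℝ^m`, `v ∈ ℝ^n` with
`u i * v j ≤ X i j` for all `(i,j)`.  If `X = W * H` with `W, H` entrywise
nonnegative of inner dimension `r`, then `⟨L, X⟩ ≤ r`. -/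
theorem ssb_valid {m n r : ℕ}
    (X : Matrix (Fin m) (Fin n) ℝ) (hX : ∀ i j, 0 ≤ X i j)
    (L : Matrix (Fin m) (Fin n) ℝ)
    (hL : ∀ (u : Fin m → ℝ) (v : Fin n → ℝ),
      (∀ i, 0 ≤ u i) → (∀ j, 0 ≤ v j) →
      (∀ i j, u i * v j ≤ X i j) →
      ∑ i, ∑ j, L i j * (u i * v j) ≤ 1)
    (W : Matrix (Fin m) (Fin r) ℝ) (H : Matrix (Fin r) (Fin n) ℝ)
    (hW : ∀ i k, 0 ≤ W i k) (hH : ∀ k j, 0 ≤ H k j)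
    (hWH : X = W * H) :
    ∑ i, ∑ j, L i j * X i j ≤ (r : ℝ) := by
  -- Each rank-one term `W_{·k} H_{k·}` is admissible: the other terms of `X i j` are nonnegative.
  have hk : ∀ k, ∑ i, ∑ j, L i j * (W i k * H k j) ≤ 1 := fun k =>
    hL (fun i => W i k) (fun j => H k j) (fun i => hW i k) (hH k) fun i j => by
      rw [hWH, Matrix.mul_apply]
      exact Finset.single_le_sum (f := fun k => W i k * H k j)
        (fun k _ => mul_nonneg (hW i k) (hH k j)) (Finset.mem_univ k)
  calc ∑ i, ∑ j, L i j * X i j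
      = ∑ i, ∑ j, ∑ k, L i j * (W i k * H k j) := by
        simp only [hWH, Matrix.mul_apply, Finset.mul_sum]
    _ = ∑ i, ∑ k, ∑ j, L i j * (W i k * H k j) :=
        Finset.sum_congr rfl fun _ _ => Finset.sum_comm
    _ = ∑ k, ∑ i, ∑ j, L i j * (W i k * H k j) := Finset.sum_comm
    _ ≤ ∑ _k : Fin r, (1 : ℝ) := Finset.sum_le_sum fun k _ => hk k
    _ = r := by simp
end

section
/- Let X ∈ ℝ^{m×n} be entrywise nonnegative, let L ∈ ℝ^{m×n}, and let α > 0 be such that ⟨L, u v^T⟩ ≤ α for all u ∈ ℝ^m, v ∈ ℝ^n with nonnegative entries satisfying u_i v_j ≤ X_{ij} for all (i,j). If X = W·H with W ∈ ℝ^{m×r}, H ∈ ℝ^{r×n} entrywise nonnegative, then ⟨L, X⟩ ≤ r·α. (Thus, in the cutting-plane scheme for the self-scaled bound, the rescaled functional L/α certifies the lower bound ⟨L,X⟩/α ≤ rank_+(X).) -/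
/-!
The factorization writes `X = ∑ k, W_{·k} H_{k·}` as a sum of `r` nonnegative rank-one
matrices. Each of them is entrywise at most `X`, since the others are nonnegative, so the
functional `⟨L, ·⟩` is at most `α` on each; by linearity `⟨L, X⟩ ≤ r α`.
-/

/-- Cutting-plane certificate for the self-scaled bound.  Let `X` be entrywise
nonnegative, `L ∈ ℝ^{m×n}`, and `α > 0` such that `⟨L, u vᵀ⟩ ≤ α` for all
nonnegative `u ∈ ℝ^m`, `v ∈ ℝ^n` with `u i * v j ≤ X i j` for all `(i,j)`.
If `X = W * H` with `W, H` entrywise nonnegative of inner dimension `r`, then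
`⟨L, X⟩ ≤ r * α`. -/
theorem ssb_cutting_plane_valid {m n r : ℕ}
    (X : Matrix (Fin m) (Fin n) ℝ) (hX : ∀ i j, 0 ≤ X i j)
    (L : Matrix (Fin m) (Fin n) ℝ) (α : ℝ) (hαpos : 0 < α)
    (hα : ∀ (u : Fin m → ℝ) (v : Fin n → ℝ),
      (∀ i, 0 ≤ u i) → (∀ j, 0 ≤ v j) →
      (∀ i j, u i * v j ≤ X i j) →
      ∑ i, ∑ j, L i j * (u i * v j) ≤ α)
    (W : Matrix (Fin m) (Fin r) ℝ) (H : Matrix (Fin r) (Fin n) ℝ)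
    (hW : ∀ i k, 0 ≤ W i k) (hH : ∀ k j, 0 ≤ H k j)
    (hWH : X = W * H) :
    ∑ i, ∑ j, L i j * X i j ≤ (r : ℝ) * α := by
  have hterm : ∀ k, ∑ i, ∑ j, L i j * (W i k * H k j) ≤ α := by
    intro k
    refine hα (fun i => W i k) (fun j => H k j) (fun i => hW i k) (hH k) fun i j => ?_
    rw [hWH, Matrix.mul_apply]
    exact Finset.single_le_sum (f := fun l => W i l * H l j)
      (fun l _ => mul_nonneg (hW i l) (hH l j)) (Finset.mem_univ k)
  calc ∑ i, ∑ j, L i j * X i j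
      = ∑ i, ∑ j, ∑ k, L i j * (W i k * H k j) := by
        simp only [hWH, Matrix.mul_apply, Finset.mul_sum]
    _ = ∑ k, ∑ i, ∑ j, L i j * (W i k * H k j) := by
        rw [Finset.sum_comm]
        simp_rw [Finset.sum_comm (s := (Finset.univ : Finset (Fin m)))
          (t := (Finset.univ : Finset (Fin r)))]
        rw [Finset.sum_comm]
        exact Finset.sum_congr rfl fun k _ => Finset.sum_comm
    _ ≤ ∑ _k : Fin r, α := Finset.sum_le_sum fun k _ => hterm k
    _ = (r : ℝ) * α := by simp
end

section
/- Let X ∈ ℝ^{m×n} be entrywise nonnegative and nonzero, let L ∈ ℝ^{m×n}, and let α > 0 satisfy ⟨L, u v^T⟩ ≤ α for all u ∈ [0,1]^m and v ∈ [0,1]^n. Define L' := L / (‖X‖_∞ · α). Then ⟨L', R⟩ ≤ 1 for every matrix R = u v^T with u ∈ ℝ_+^m, v ∈ ℝ_+^n and R ≤ X entrywise, and moreover ⟨L', X⟩ = ⟨L, X⟩ / (‖X‖_∞ · α). (This shows that every functional feasible for the hyperplane separation bound yields, after rescaling, a functional feasible for the self-scaled bound with the same implied lower bound; hence SSB(X)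 ≥ HSB(X).) -/
/-!
The constraint `u vᵀ ≤ X` bounds only the products `u i * v j`, by `C`, so the scale is first
redistributed between the two factors. If `u ≠ 0` has largest entry `u i₀`, then `u / u i₀` and
`u i₀ • v / C` both lie in the unit cube (for the latter, `u i₀ * v j ≤ X i₀ j ≤ C`), and their
outer product is `u vᵀ / C`. Applying the hypothesis on `L` to this pair and dividing by `α` gives
the bound. The second claim is linearity of the inner product.
-/

/-- Every functional feasible for the hyperplane separation bound yields, after
rescaling by `‖X‖_∞ · α`, a functional feasible for the self-scaled bound with
the same implied lower bound.  Here `C = ‖X‖_∞` is the largest entry of the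
nonnegative nonzero matrix `X`, `α > 0` satisfies `⟨L, u vᵀ⟩ ≤ α` for all
`u ∈ [0,1]^m`, `v ∈ [0,1]^n`, and `L' = L / (C * α)`. -/
theorem hsb_feasible_rescales_to_ssb_feasible {m n : ℕ}
    (X : Matrix (Fin m) (Fin n) ℝ) (hX : ∀ i j, 0 ≤ X i j)
    (hX0 : ∃ i j, X i j ≠ 0)
    (L : Matrix (Fin m) (Fin n) ℝ) (α C : ℝ) (hαpos : 0 < α)
    (hCub : ∀ i j, X i j ≤ C) (hCmem : ∃ i j, X i j = C)
    (hα : ∀ (u : Fin m → ℝ) (v : Fin n → ℝ),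
      (∀ i, 0 ≤ u i ∧ u i ≤ 1) → (∀ j, 0 ≤ v j ∧ v j ≤ 1) →
      ∑ i, ∑ j, L i j * (u i * v j) ≤ α) :
    (∀ (u : Fin m → ℝ) (v : Fin n → ℝ),
      (∀ i, 0 ≤ u i) → (∀ j, 0 ≤ v j) →
      (∀ i j, u i * v j ≤ X i j) →
      ∑ i, ∑ j, (L i j / (C * α)) * (u i * v j) ≤ 1) ∧
    (∑ i, ∑ j, (L i j / (C * α)) * X i j
      = (∑ i, ∑ j, L i j * X i j) / (C * α)) := by
  obtain ⟨i₁, j₁, h₁⟩ := hX0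
  have hC : 0 < C := lt_of_lt_of_le (lt_of_le_of_ne (hX i₁ j₁) (Ne.symm h₁)) (hCub i₁ j₁)
  refine ⟨fun u v hu hv huv => ?_, ?_⟩
  · obtain ⟨i₀, -, hmax⟩ := Finset.exists_max_image Finset.univ u ⟨i₁, Finset.mem_univ _⟩
    rcases (hu i₀).eq_or_lt with h0 | hpos
    · have hz : ∀ i, u i = 0 := fun i =>
        le_antisymm (h0 ▸ hmax i (Finset.mem_univ i)) (hu i)
      simp [hz]
    · have key := hα (fun i => u i / u i₀) (fun j => u i₀ * v j / C)
        (fun i => ⟨div_nonneg (hu i) hpos.le,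
          (div_le_one hpos).2 (hmax i (Finset.mem_univ i))⟩)
        (fun j => ⟨div_nonneg (mul_nonneg hpos.le (hv j)) hC.le,
          (div_le_one hC).2 ((huv i₀ j).trans (hCub i₀ j))⟩)
      have heq : ∑ i, ∑ j, (L i j / (C * α)) * (u i * v j)
          = (∑ i, ∑ j, L i j * (u i / u i₀ * (u i₀ * v j / C))) / α := by
        simp only [Finset.sum_div]
        refine Finset.sum_congr rfl fun i _ => Finset.sum_congr rfl fun j _ => ?_
        field_simp
      rw [heq]
      exact (div_le_one hαpos).2 key
  · simp only [Finset.sum_div, div_mul_eq_mul_div]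
end

section
/- Let X ∈ ℝ^{m×n} be entrywise nonnegative and let U ∈ {0,1}^{m×r}, V ∈ {0,1}^{r×n} satisfy: (i) every column of U sums to 1 and every row of V sums to 1; (ii) every row of U sums to at most 1 and every column of V sums to at most 1; (iii) U_{ik}·V_{kj} = 0 for all (i,j) ∉ supp(X) and all k ∈ {1,…,r}; and (iv) for all 1 ≤ k < l ≤ r, Σ_{(i,j) ∈ supp(X)} (U_{ik}·V_{lj} + U_{il}·V_{kj}) ≤ 1. For each k let i_k be the unique row index with U_{i_k,k} = 1 and j_k the unique column index with V_{k,j_k} = 1. Then the positions (i_1,j_1),…,(i_r,j_r) are pairwise distinct and form a fooling set of X of cardinality r. -/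
theorem index_unique_of_sum_le_one {ι : Type*} [Fintype ι] {f : ι → ℝ}
    (hf : ∀ a, 0 ≤ f a) (hsum : ∑ a, f a ≤ 1) {a b : ι} (ha : f a = 1) (hb : f b = 1) :
    a = b := by
  classical
  by_contra hab
  have h : ∑ x ∈ ({a, b} : Finset ι), f x ≤ ∑ x, f x :=
    Finset.sum_le_sum_of_subset_of_nonneg (Finset.subset_univ _) fun x _ _ => hf x
  rw [Finset.sum_pair hab, ha, hb] at h
  linarith

/-- Correctness of the non-convex feasibility model for the fooling set bound.
Let `X` be nonnegative and `U ∈ {0,1}^{m×r}`, `V ∈ {0,1}^{r×n}` satisfy: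
(i) each column of `U` and each row of `V` sums to `1`;
(ii) each row of `U` and each column of `V` sums to at most `1`;
(iii) `U i k * V k j = 0` whenever `X i j = 0`;
(iv) for all `k < l`, `∑_{(i,j) ∈ supp X} (U i k * V l j + U i l * V k j) ≤ 1`.
If `idx k` and `jdx k` are the row/column indices selected by the `k`-th
assignment (`U (idx k) k = 1`, `V k (jdx k) = 1`), then the positions
`(idx k, jdx k)` are pairwise distinct and form a fooling set of `X` of
cardinality `r`. -/
theorem fsb_model_yields_fooling_set {m n r : ℕ}
    (X : Matrix (Fin m) (Fin n) ℝ) (hX : ∀ i j, 0 ≤ X i j)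
    (U : Matrix (Fin m) (Fin r) ℝ) (V : Matrix (Fin r) (Fin n) ℝ)
    (hU : ∀ i k, U i k = 0 ∨ U i k = 1)
    (hV : ∀ k j, V k j = 0 ∨ V k j = 1)
    (hUcol : ∀ k, ∑ i, U i k = 1)
    (hVrow : ∀ k, ∑ j, V k j = 1)
    (hUrow : ∀ i, ∑ k, U i k ≤ 1)
    (hVcol : ∀ j, ∑ k, V k j ≤ 1)
    (hadm : ∀ i j, X i j = 0 → ∀ k, U i k * V k j = 0)
    (hcross : ∀ k l : Fin r, k < l →
      ∑ p ∈ Finset.univ.filter (fun p : Fin m × Fin n => 0 < X p.1 p.2),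
        (U p.1 k * V l p.2 + U p.1 l * V k p.2) ≤ 1)
    (idx : Fin r → Fin m) (jdx : Fin r → Fin n)
    (hidx : ∀ k, U (idx k) k = 1) (hjdx : ∀ k, V k (jdx k) = 1) :
    Function.Injective (fun k : Fin r => (idx k, jdx k)) ∧
    IsFoolingSet X (Finset.image (fun k : Fin r => (idx k, jdx k)) Finset.univ) ∧
    (Finset.image (fun k : Fin r => (idx k, jdx k)) Finset.univ).card = r := by
  have hU0 : ∀ i k, 0 ≤ U i k := fun i k => by rcases hU i k with h | h <;> simp [h]
  have hV0 : ∀ k j, 0 ≤ V k j := fun k j => by rcases hV k j with h | h <;> simp [h]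
  have hidx_inj : Function.Injective idx := fun k l h =>
    index_unique_of_sum_le_one (hU0 (idx k)) (hUrow (idx k)) (hidx k) (h ▸ hidx l)
  have hjdx_inj : Function.Injective jdx := fun k l h =>
    index_unique_of_sum_le_one (fun a => hV0 a (jdx k)) (hVcol (jdx k)) (hjdx k) (h ▸ hjdx l)
  have hinj : Function.Injective (fun k : Fin r => (idx k, jdx k)) := fun k l h =>
    hidx_inj (congrArg Prod.fst h)
  have hzero : ∀ k l : Fin r, k < l → X (idx k) (jdx l) = 0 ∨ X (idx l) (jdx k) = 0 := by
    intro k l hkl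
    by_contra! hne
    have hpos₁ := lt_of_le_of_ne (hX _ _) hne.1.symm
    have hpos₂ := lt_of_le_of_ne (hX _ _) hne.2.symm
    have hpq : (idx k, jdx l) ≠ (idx l, jdx k) := fun h =>
      hkl.ne (hidx_inj (congrArg Prod.fst h))
    have hsub : ({(idx k, jdx l), (idx l, jdx k)} : Finset (Fin m × Fin n)) ⊆
        Finset.univ.filter (fun p : Fin m × Fin n => 0 < X p.1 p.2) := by
      intro p hp
      rcases Finset.mem_insert.1 hp with rfl | hp
      · simpa using hpos₁
      · rw [Finset.mem_singleton.1 hp]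
        simpa using hpos₂
    have hle := (Finset.sum_le_sum_of_subset_of_nonneg
      (f := fun p : Fin m × Fin n => U p.1 k * V l p.2 + U p.1 l * V k p.2) hsub
      fun p _ _ => add_nonneg (mul_nonneg (hU0 _ _) (hV0 _ _))
        (mul_nonneg (hU0 _ _) (hV0 _ _))).trans (hcross k l hkl)
    rw [Finset.sum_pair hpq] at hle
    simp only [hidx, hjdx] at hle
    have h₁ := mul_nonneg (hU0 (idx k) l) (hV0 k (jdx l))
    have h₂ := mul_nonneg (hU0 (idx l) k) (hV0 l (jdx k))
    linarith
  refine ⟨hinj, ⟨?_, ?_⟩, ?_⟩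
  · intro p hp
    obtain ⟨k, -, rfl⟩ := Finset.mem_image.1 hp
    refine lt_of_le_of_ne (hX _ _) fun h => ?_
    have hk := hadm _ _ h.symm k
    simp [hidx, hjdx] at hk
  · intro p hp q hq hpq
    obtain ⟨k, -, rfl⟩ := Finset.mem_image.1 hp
    obtain ⟨l, -, rfl⟩ := Finset.mem_image.1 hq
    have hkl : k ≠ l := fun h => hpq (by rw [h])
    refine ⟨hidx_inj.ne hkl, hjdx_inj.ne hkl, ?_⟩
    rcases hkl.lt_or_gt with h | h
    · exact hzero k l h
    · exact (hzero l k h).symm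
  · rw [Finset.card_image_of_injective _ hinj, Finset.card_univ, Fintype.card_fin]
end
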